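/- arXiv:1710.04865 — 5 statements merged into one kernel-verified Lean document; each statement's English description precedes it below -/
import Mathlib

section
/- Let m and p be positive integers and set l = 4mp−1 and t = 4mp−2p−1. Then for every integer j with 1 ≤ j ≤ 2mp−1, the sign σ_j = (−1)^{⌊(2j−1)t/l⌋} equals 1 if j mod 2m lies in {1, 2, …, m}, and equals −1 if j mod 2m lies in {0, m+1, m+2, …, 2m−1}. -/
open Finset

noncomputable section

/-- The q-Pochhammer symbol `(a; q)_n = ∏_{k=0}^{n-1} (1 - a q^k)`. -/
def qPoch (a q : ℂ) (n : ℕ) : ℂ := ∏ k ∈ Finset.range n, (1 - a * q ^ k)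

/-- The Gaussian binomial coefficient `[n; k]_q` as a polynomial in `q` over `ℤ`,
defined by the q-Pascal rule `[n; k] = [n-1; k-1] + q^k [n-1; k]`.  It is the
polynomial equal to `(q;q)_n / ((q;q)_{n-k} (q;q)_k)`. -/
def gaussPoly : ℕ → ℕ → Polynomial ℤ
  | _, 0 => 1
  | 0, _ + 1 => 0
  | n + 1, k + 1 => gaussPoly n k + Polynomial.X ^ (k + 1) * gaussPoly n (k + 1)

/-- The Gaussian binomial coefficient `[n; k]_q` evaluated at `q : ℂ`. -/
def gbin (q : ℂ) (n k : ℕ) : ℂ := Polynomial.aeval q (gaussPoly n k)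

/-- `σ_j = (-1)^⌊(2j-1)t/l⌋`. -/
def sigmaT (l t j : ℕ) : ℤ := (-1) ^ ((2 * j - 1) * t / l)

/-- `r(j)`: the unique integer with `r(j) ≡ (2j-1)t (mod 2l)` and `-l < r(j) < l`. -/
def rT (l t j : ℕ) : ℤ :=
  if (((2 * j - 1) * t % (2 * l) : ℕ) : ℤ) < (l : ℤ) then (((2 * j - 1) * t % (2 * l) : ℕ) : ℤ)
  else (((2 * j - 1) * t % (2 * l) : ℕ) : ℤ) - 2 * (l : ℤ)

/-- `r'(j) = (|r(j)| + 1)/2`. -/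
def rpT (l t j : ℕ) : ℕ := ((rT l t j).natAbs + 1) / 2

open Classical in
/-- `i_k`: the unique `j ∈ {1, …, (l-1)/2}` with `r'(j) = k`. -/
def iT (l t k : ℕ) : ℕ :=
  if h : ∃ j, j ∈ Finset.Icc 1 ((l - 1) / 2) ∧ rpT l t j = k then h.choose else 0

/-- `ε_{i,j,m}`: `1` if `j ≡ -i, -i-1 (mod 2m)`, `-1` if `j ≡ i, i-1 (mod 2m)`,
`0` otherwise (and `0` when `m ∣ i`, a case excluded in all uses). -/
def epsLO (m i j : ℕ) : ℤ :=
  if m ∣ i then 0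
  else if 2 * m ∣ (i + j) ∨ 2 * m ∣ (i + j + 1) then 1
  else if (2 * (m : ℤ)) ∣ ((j : ℤ) - (i : ℤ)) ∨ (2 * (m : ℤ)) ∣ ((j : ℤ) - (i : ℤ) + 1) then -1
  else 0

/-- `Δ_{i,j,m}`: `1` if `j ≡ -i, -i+1 (mod 2m)`, `-1` if `j ≡ i, i+1 (mod 2m)`,
`0` otherwise (and `0` when `m ∣ i`, a case excluded in all uses). -/
def deltaLO (m i j : ℕ) : ℤ :=
  if m ∣ i then 0
  else if 2 * m ∣ (i + j) ∨ 2 * m ∣ (i + j - 1) then 1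
  else if (2 * (m : ℤ)) ∣ ((j : ℤ) - (i : ℤ)) ∨ (2 * (m : ℤ)) ∣ ((j : ℤ) - (i : ℤ) - 1) then -1
  else 0

/-- `γ_{i,m} = 1` if `i ≡ 1, …, m-1 (mod 2m)` and `-1` otherwise. -/
def gamLO (m i : ℕ) : ℤ :=
  if 1 ≤ i % (2 * m) ∧ i % (2 * m) ≤ m - 1 then 1 else -1

/-- `β_{i,m} = 1` if `i ≡ 1, …, m-1 (mod 2m)`, `-1` if `i ≡ m+1, …, 2m-1 (mod 2m)`,
and `0` if `m ∣ i`. -/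
def betLO (m i : ℕ) : ℤ :=
  if 1 ≤ i % (2 * m) ∧ i % (2 * m) ≤ m - 1 then 1
  else if m + 1 ≤ i % (2 * m) ∧ i % (2 * m) ≤ 2 * m - 1 then -1
  else 0

/-- Extend a tuple `f : Fin P → Fin N` to `n : ℕ → ℕ` with `n i = f (i-1)` for
`1 ≤ i ≤ P` and `n i = 0` otherwise (in particular `n 0 = 0`). -/
def extTup (P N : ℕ) (f : Fin P → Fin N) : ℕ → ℕ :=
  fun i => if h : 1 ≤ i ∧ i ≤ P then (f ⟨i - 1, by omega⟩ : ℕ) else 0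

/-- Takata's exponent `a(n)` (an integer; every integer division below is exact). -/
def aT (l t : ℕ) (n : ℕ → ℕ) : ℤ :=
  -(∑ j ∈ Icc 1 ((l - 1) / 2), (∑ k ∈ Icc (rpT l t j) ((l - 1) / 2),
      (sigmaT l t (iT l t k) + sigmaT l t (iT l t ((l - 1) / 2 + 1 - k))) / 2) *
      ((n j : ℤ) - (n (j - 1) : ℤ)))
  - ∑ j ∈ Icc 1 ((l - 1) / 2 - 1), ((sigmaT l t (j + 1) + sigmaT l t ((l - 1) / 2 + 1 - j)) / 2) * (n j : ℤ)
  - ((sigmaT l t ((l - 1) / 2) + 1) / 2) * (n ((l - 1) / 2) : ℤ)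
  - ∑ j ∈ Icc 1 ((l - 1) / 2), sigmaT l t j

/-- Takata's exponent `b₁(n)` (an integer; every integer division below is exact
whenever the factor it multiplies is nonzero). -/
def b1T (l t : ℕ) (n : ℕ → ℕ) : ℤ :=
  -aT l t n
  + ∑ k ∈ Icc 1 ((l - t) / 2), ((1 - sigmaT l t (iT l t k)) / 2) * (n (iT l t k - 1) : ℤ)
  - ∑ k ∈ Icc ((l - t) / 2 + 1) ((l - 1) / 2), (n (iT l t k - 1) : ℤ)
  + ∑ k ∈ Icc ((l - t) / 2 + 1) ((l - 1) / 2), ((1 + sigmaT l t (iT l t k)) / 2) * (n (iT l t k) : ℤ)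
  - (1 + sigmaT l t ((l - 1) / 2)) * (n ((l - 1) / 2) : ℤ)
  + ∑ j ∈ Icc 1 ((l - 1) / 2 - 1), ((sigmaT l t (j + 1) - sigmaT l t j) / 2) * (n j : ℤ)
  - ∑ k ∈ Icc 1 ((l - 1) / 2 - 1), ∑ k' ∈ Icc (k + 1) ((l - 1) / 2),
      ((1 + Int.sign ((iT l t k : ℤ) - (iT l t k' : ℤ))) / 2) *
        ((sigmaT l t (iT l t k) - sigmaT l t (iT l t k')) / 2) *
        ((n (iT l t k) : ℤ) - (n (iT l t k - 1) : ℤ)) *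
        ((n (iT l t k') : ℤ) - (n (iT l t k' - 1) : ℤ))
  + ∑ j ∈ Icc 1 ((l - 1) / 2), sigmaT l t j *
      (∑ k ∈ Icc 1 (rpT l t j), ((n (iT l t k) : ℤ) - (n (iT l t k - 1) : ℤ))) * (n (j - 1) : ℤ)

/-- Takata's exponent `b₂(n)`. -/
def b2T (l t : ℕ) (n : ℕ → ℕ) : ℤ :=
  if l < 2 * t then
    ∑ k ∈ Icc ((l - t) / 2 + 1) ((t - 1) / 2),
      ((1 + sigmaT l t (iT l t k)) / 2) * (n (iT l t k - 1) : ℤ)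
  else
    -∑ k ∈ Icc ((t + 1) / 2 + 1) ((l - t) / 2),
      ((1 + sigmaT l t (iT l t k)) / 2) * (n (iT l t k - 1) : ℤ)

/-- Takata's `κ(p')`. -/
def kapT (l t N : ℕ) (n : ℕ → ℕ) : ℤ :=
  if sigmaT l t ((l - 1) / 2) = -1 then -(N : ℤ) * (n ((l - 1) / 2) : ℤ) else 0

/-- Takata's `τ(j)`. -/
def tauT (l t : ℕ) (q : ℂ) (n : ℕ → ℕ) (j : ℕ) : ℂ :=
  if sigmaT l t j = -1 then (-1 : ℂ) ^ (n j - n (j - 1))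
  else q ^ ((((n j : ℤ) - (n (j - 1) : ℤ)) * (((n j : ℤ) - (n (j - 1) : ℤ)) + 1)) / 2)

/-- Takata's `X(n)`. -/
def XT (l t N : ℕ) (q : ℂ) (n : ℕ → ℕ) : ℂ :=
  (-1 : ℂ) ^ (n ((l - 1) / 2)) * q ^ kapT l t N n *
    (qPoch q q (N - 1) * qPoch q q (n ((l - 1) / 2)) / qPoch q q (N - n ((l - 1) / 2) - 1)) *
    ∏ j ∈ Icc 1 ((l - 1) / 2), tauT l t q n j / qPoch q q (n j - n (j - 1))

/- With `s = l - t`, the floor `⌊(2j-1)t/l⌋` and the ceiling `⌈(2j-1)s/l⌉` add up to the odd number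
`2j-1`, so `σ_j` is determined by the parity of the ceiling. Here `s/l = 2p/(4mp-1)` lies only just
above `1/(2m)`, which makes `⌈(2j-1)s/l⌉ = ⌈j/m⌉` as long as `j < m(2p+1)`. -/

theorem mul_div_add_mul_ceilDiv (x : ℕ) {s t : ℕ} (hst : 0 < s + t) :
    x * t / (s + t) + x * s ⌈/⌉ (s + t) = x := by
  have hq_le : (s + t) * (x * t / (s + t)) ≤ x * t := Nat.mul_div_le _ _
  have hlt_q : x * t < (s + t) * (x * t / (s + t) + 1) := Nat.lt_mul_div_succ _ hst
  have hq_le_x : x * t / (s + t) ≤ x := Nat.div_le_of_le_mul (by linarith [Nat.zero_le (x * s)])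
  obtain ⟨d, hd⟩ := Nat.exists_eq_add_of_le hq_le_x
  have hsum : x * s + x * t = (s + t) * (x * t / (s + t)) + (s + t) * d := by
    linear_combination (s + t) * hd
  have hceil : x * s ⌈/⌉ (s + t) = d := by
    refine eq_of_forall_ge_iff fun n => ?_
    rw [ceilDiv_le_iff_le_mul hst]
    constructor
    · intro h
      have hlt : (s + t) * d < (s + t) * (n + 1) := by linarith
      exact Nat.le_of_lt_succ (Nat.lt_of_mul_lt_mul_left hlt)
    · intro h
      linarith [Nat.mul_le_mul_left (s + t) h]
  rw [hceil, ← hd]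

theorem add_mul_ceilDiv_left {m : ℕ} (hm : 0 < m) (r k : ℕ) :
    (r + m * k) ⌈/⌉ m = r ⌈/⌉ m + k := by
  rw [Nat.ceilDiv_eq_add_pred_div, Nat.ceilDiv_eq_add_pred_div, ← Nat.add_mul_div_left _ _ hm]
  congr 1
  omega

theorem even_ceilDiv_iff {m : ℕ} (hm : 0 < m) (j : ℕ) :
    Even (j ⌈/⌉ m) ↔ j % (2 * m) = 0 ∨ m + 1 ≤ j % (2 * m) := by
  have hr : j % (2 * m) < 2 * m := Nat.mod_lt _ (by positivity)
  have hsplit : j ⌈/⌉ m = j % (2 * m) ⌈/⌉ m + 2 * (j / (2 * m)) := by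
    rw [← add_mul_ceilDiv_left hm, ← mul_assoc, mul_comm m 2, Nat.mod_add_div]
  have hle (c : ℕ) : j % (2 * m) ⌈/⌉ m ≤ c ↔ j % (2 * m) ≤ m * c := ceilDiv_le_iff_le_mul hm
  have hle_zero := hle 0
  have hle_one := hle 1
  have hle_two := hle 2
  rw [Nat.even_iff]
  omega

theorem sigmaT_add_left {s t j : ℕ} (hst : 0 < s + t) (hj : 1 ≤ j) :
    sigmaT (s + t) t j = (-1) ^ ((2 * j - 1) * s ⌈/⌉ (s + t) + 1) := by
  have hsum := mul_div_add_mul_ceilDiv (2 * j - 1) hst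
  have hparity : Even ((2 * j - 1) * t / (s + t)) ↔ Even ((2 * j - 1) * s ⌈/⌉ (s + t) + 1) := by
    grind
  exact neg_one_pow_congr hparity

theorem two_mul_sub_one_mul_le_mul_iff {l m p j n : ℕ} (hl : l + 1 = 4 * m * p) (hj1 : 1 ≤ j)
    (hj : j < m * (2 * p + 1)) :
    (2 * j - 1) * (2 * p) ≤ l * n ↔ j ≤ m * n := by
  have hleft : (2 * j - 1) * (2 * p) + 2 * p = 4 * p * j := by
    obtain ⟨i, rfl⟩ := Nat.exists_eq_add_of_le' hj1
    grind
  have hright : l * n + n = 4 * p * (m * n) := by linear_combination n * hl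
  have hp : 0 < p := by grind
  -- The left-hand inequality now reads `4pj + n ≤ 4p(mn) + 2p`.
  constructor
  · intro h
    have hlt : 4 * p * j < 4 * p * (m * n + 1) := by linarith
    exact Nat.le_of_lt_succ (Nat.lt_of_mul_lt_mul_left hlt)
  · intro h
    rcases le_or_gt n (2 * p) with hn | hn
    · linarith [Nat.mul_le_mul_left (4 * p) h]
    · obtain ⟨e, rfl⟩ := Nat.exists_eq_add_of_lt hn
      have hj' : 4 * p * (j + 1) ≤ 4 * p * (m * (2 * p + 1)) := Nat.mul_le_mul_left _ hj
      have he : e ≤ m * p * e := Nat.le_mul_of_pos_left e (by grind)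
      linarith

theorem two_mul_sub_one_mul_ceilDiv {m p j : ℕ} (hp : 0 < p) (hj1 : 1 ≤ j)
    (hj : j < m * (2 * p + 1)) :
    (2 * j - 1) * (2 * p) ⌈/⌉ (4 * m * p - 1) = j ⌈/⌉ m := by
  have hm : 0 < m := Nat.pos_of_mul_pos_right (Nat.zero_lt_of_lt hj)
  have hmp : 0 < m * p := Nat.mul_pos hm hp
  have hl : 4 * m * p - 1 + 1 = 4 * m * p := Nat.sub_add_cancel (by linarith)
  refine eq_of_forall_ge_iff fun n => ?_
  rw [ceilDiv_le_iff_le_mul (by grind), ceilDiv_le_iff_le_mul hm]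
  exact two_mul_sub_one_mul_le_mul_iff hl hj1 hj

theorem sigmaT_eq_neg_one_pow_ceilDiv {m p j : ℕ} (hp : 0 < p) (hj1 : 1 ≤ j)
    (hj : j < m * (2 * p + 1)) :
    sigmaT (4 * m * p - 1) (4 * m * p - 2 * p - 1) j = (-1) ^ (j ⌈/⌉ m + 1) := by
  have hmp : p ≤ m * p := Nat.le_mul_of_pos_left p (by grind)
  have hl : 2 * p + (4 * m * p - 2 * p - 1) = 4 * m * p - 1 := by grind
  have hσ := sigmaT_add_left (s := 2 * p) (t := 4 * m * p - 2 * p - 1) (by grind) hj1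
  rwa [hl, two_mul_sub_one_mul_ceilDiv hp hj1 hj] at hσ

theorem sigma_formula_neg_neg_general {m p j : ℕ} (hp : 0 < p) (hj1 : 1 ≤ j)
    (hj : j < m * (2 * p + 1)) :
    (1 ≤ j % (2 * m) ∧ j % (2 * m) ≤ m →
      sigmaT (4 * m * p - 1) (4 * m * p - 2 * p - 1) j = 1) ∧
    (j % (2 * m) = 0 ∨ m + 1 ≤ j % (2 * m) →
      sigmaT (4 * m * p - 1) (4 * m * p - 2 * p - 1) j = -1) := by
  have hm : 0 < m := Nat.pos_of_mul_pos_right (Nat.zero_lt_of_lt hj)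
  have heven := even_ceilDiv_iff hm j
  rw [sigmaT_eq_neg_one_pow_ceilDiv hp hj1 hj]
  constructor <;> intro hr
  · have hodd : Odd (j ⌈/⌉ m) := by
      rw [← Nat.not_even_iff_odd, heven]
      omega
    exact hodd.add_one.neg_one_pow
  · exact (heven.2 hr).add_one.neg_one_pow

/-- Lemma 2.2(i): for `l = 4mp-1`, `t = 4mp-2p-1`, the sign `σ_j` is `1` if
`j ≡ 1, …, m (mod 2m)` and `-1` if `j ≡ 0, m+1, …, 2m-1 (mod 2m)`. -/
theorem sigma_formula_neg_neg
    (m p : ℕ) (hm : 0 < m) (hp : 0 < p)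
    (j : ℕ) (hj1 : 1 ≤ j) (hj2 : j ≤ 2 * m * p - 1) :
    (1 ≤ j % (2 * m) ∧ j % (2 * m) ≤ m →
      sigmaT (4 * m * p - 1) (4 * m * p - 2 * p - 1) j = 1) ∧
    (j % (2 * m) = 0 ∨ m + 1 ≤ j % (2 * m) →
      sigmaT (4 * m * p - 1) (4 * m * p - 2 * p - 1) j = -1) :=
  sigma_formula_neg_neg_general hp hj1 (by grind)

end
end

section
/- Let m and p be positive integers and set l = 4mp−1, t = 4mp−2p−1, p' = 2mp−1. Let s and k be integers with 0 ≤ s ≤ 2m−1 and sp+1 ≤ k ≤ min((s+1)p, 2mp−1). Then i_k = 2m(p−k) + m + (s/2)(4mp−1) if s is even, and i_k = 2m(k−p) − m + 1 − ((s−1)/2)(4mp−1) if s is odd. -/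
open Finset

noncomputable section

/-!
Both `r(j)` and `2j - 1` are odd, and an odd integer of absolute value below an odd `l` is
determined up to sign by its class modulo `l` up to sign. Since `t` is invertible modulo `l`,
`2 i_k - 1` is the unique odd `a ∈ (0, l)` with `a t ≡ ±(2k-1) (mod l)`. If `u` is inverse to `-t`
modulo `l` and `u + n` is odd, then `|u(2k-1) - n l|` is such an `a` as soon as it is smaller
than `l`.

For `l = 4mp-1` and `t = l - 2p` one can take `u = 2m`, so `2 i_k - 1` is the distance from
`2m(2k-1)` to the nearest odd multiple of `l`. The range of `k` says that `2m(2k-1)` lies strictly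
between `s l` and `(s+1) l`; the parity of `s` decides which of the two ends is the odd multiple.
-/

lemma odd_two_mul_sub_one {R : Type*} [Ring R] (a : R) : Odd (2 * a - 1) :=
  odd_sub_one.2 (even_two_mul a)

lemma abs_eq_abs_of_odd_of_modEq {l a b : ℤ} (hl : Odd l) (ha : Odd a) (hb : Odd b)
    (hal : |a| ≤ l) (hbl : |b| < l) (h : a ≡ b [ZMOD l] ∨ a ≡ -b [ZMOD l]) : |a| = |b| := by
  have eq_of_modEq {c : ℤ} (hc : Odd c) (hcl : |c| < l) (hac : a ≡ c [ZMOD l]) : a = c := by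
    have hdvd : 2 * l ∣ a - c :=
      (Int.isCoprime_two_left.2 hl).mul_dvd (ha.sub_odd hc).two_dvd hac.symm.dvd
    have habs : |a - c| < 2 * l := by linarith [abs_sub a c]
    exact sub_eq_zero.1 (Int.eq_zero_of_abs_lt_dvd hdvd habs)
  rcases h with h | h
  · rw [eq_of_modEq hb hbl h]
  · rw [eq_of_modEq hb.neg (by rwa [abs_neg]) h, abs_neg]

section

variable {l t j k : ℕ}

lemma rT_eq_bmod : rT l t j = Int.bmod ((2 * j - 1) * t : ℕ) (2 * l) := by
  rw [rT, Int.bmod_def]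
  norm_cast
  simp only [show (2 * l + 1) / 2 = l by omega]

lemma rT_modEq (hj : 1 ≤ j) : rT l t j ≡ (2 * j - 1) * t [ZMOD 2 * l] := by
  have h := Int.bmod_emod (x := ((2 * j - 1) * t : ℕ)) (m := 2 * l)
  rw [rT_eq_bmod]
  push_cast [show 1 ≤ 2 * j by omega] at h ⊢
  exact h

lemma odd_rT (ht : Odd t) (hj : 1 ≤ j) : Odd (rT l t j) := by
  have hmod : rT l t j ≡ (2 * j - 1) * t [ZMOD 2] := (rT_modEq hj).of_mul_right _
  have hodd : Odd ((2 * j - 1) * t : ℤ) := (odd_two_mul_sub_one _).mul (by exact_mod_cast ht)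
  exact Int.odd_iff.2 (Eq.trans hmod (Int.odd_iff.1 hodd))

lemma abs_rT_le (hl : 0 < l) : |rT l t j| ≤ l := by
  have hlower := Int.le_bmod (x := ((2 * j - 1) * t : ℕ)) (m := 2 * l) (by omega)
  have hupper := Int.bmod_lt (x := ((2 * j - 1) * t : ℕ)) (m := 2 * l) (by omega)
  rw [rT_eq_bmod, abs_le]
  omega

lemma two_mul_rpT_sub_one (h : Odd (rT l t j)) : 2 * (rpT l t j : ℤ) - 1 = |rT l t j| := by
  obtain ⟨c, hc⟩ := h
  rw [rpT, Int.abs_eq_natAbs]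
  omega

lemma rpT_eq_of_modEq (hl : Odd l) (ht : Odd t) (hj : 1 ≤ j) (hk : 1 ≤ k) (hkl : 2 * k ≤ l)
    (h : (2 * j - 1) * t ≡ 2 * k - 1 [ZMOD l] ∨ (2 * j - 1) * t ≡ -(2 * k - 1) [ZMOD l]) :
    rpT l t j = k := by
  have hr : rT l t j ≡ (2 * j - 1) * t [ZMOD l] := (rT_modEq hj).of_mul_left _
  have hkabs : |(2 * k - 1 : ℤ)| = 2 * k - 1 := abs_of_nonneg (by omega)
  have habs : |rT l t j| = |(2 * k - 1 : ℤ)| :=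
    abs_eq_abs_of_odd_of_modEq (by exact_mod_cast hl) (odd_rT ht hj) (odd_two_mul_sub_one _)
      (abs_rT_le hl.pos) (by omega) (h.imp hr.trans hr.trans)
  have hr' : 2 * (rpT l t j : ℤ) - 1 = |rT l t j| := two_mul_rpT_sub_one (odd_rT ht hj)
  omega

lemma rpT_injOn (hl : Odd l) (ht : Odd t) (hlt : IsCoprime (l : ℤ) t) :
    Set.InjOn (rpT l t) (Icc 1 ((l - 1) / 2)) := by
  intro i hi j hj hij
  rw [coe_Icc, Set.mem_Icc] at hi hj
  have hrabs : |rT l t i| = |rT l t j| := by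
    rw [← two_mul_rpT_sub_one (odd_rT ht hi.1), ← two_mul_rpT_sub_one (odd_rT ht hj.1), hij]
  have hri : rT l t i ≡ (2 * i - 1) * t [ZMOD l] := (rT_modEq hi.1).of_mul_left _
  have hrj : rT l t j ≡ (2 * j - 1) * t [ZMOD l] := (rT_modEq hj.1).of_mul_left _
  have cancel {a b : ℤ} (h : a * t ≡ b * t [ZMOD l]) : a ≡ b [ZMOD l] :=
    Int.modEq_iff_dvd.2 (hlt.dvd_of_dvd_mul_right (sub_mul b a (t : ℤ) ▸ h.dvd))
  have hmod : (2 * i - 1 : ℤ) ≡ 2 * j - 1 [ZMOD l] ∨ (2 * i - 1 : ℤ) ≡ -(2 * j - 1) [ZMOD l] := by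
    refine (abs_eq_abs.1 hrabs).imp (fun h => cancel ?_) (fun h => cancel ?_)
    · exact hri.symm.trans (h ▸ hrj)
    · rw [neg_mul]
      exact hri.symm.trans (h ▸ hrj.neg)
  have hiabs : |(2 * i - 1 : ℤ)| = 2 * i - 1 := abs_of_nonneg (by omega)
  have hjabs : |(2 * j - 1 : ℤ)| = 2 * j - 1 := abs_of_nonneg (by omega)
  have habs : |(2 * i - 1 : ℤ)| = |(2 * j - 1 : ℤ)| :=
    abs_eq_abs_of_odd_of_modEq (by exact_mod_cast hl) (odd_two_mul_sub_one _)
      (odd_two_mul_sub_one _) (by omega) (by omega) hmod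
  omega

lemma iT_rpT (hl : Odd l) (ht : Odd t) (hlt : IsCoprime (l : ℤ) t)
    (hj : j ∈ Icc 1 ((l - 1) / 2)) : iT l t (rpT l t j) = j := by
  have hex : ∃ i, i ∈ Icc 1 ((l - 1) / 2) ∧ rpT l t i = rpT l t j := ⟨j, hj, rfl⟩
  rw [iT, dif_pos hex]
  exact rpT_injOn hl ht hlt hex.choose_spec.1 hj hex.choose_spec.2

lemma two_mul_iT_sub_one_eq_of_modEq (hl : Odd l) (ht : Odd t) (hlt : IsCoprime (l : ℤ) t)
    (hk : 1 ≤ k) (hkl : 2 * k ≤ l) {a : ℤ} (ha : Odd a) (ha0 : 0 < a) (hal : a < l)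
    (h : a * t ≡ 2 * k - 1 [ZMOD l] ∨ a * t ≡ -(2 * k - 1) [ZMOD l]) :
    2 * (iT l t k : ℤ) - 1 = a := by
  obtain ⟨j, rfl⟩ : ∃ j : ℕ, a = 2 * j - 1 := by
    obtain ⟨c, rfl⟩ := ha
    exact ⟨(c + 1).toNat, by omega⟩
  have hrk : rpT l t j = k := rpT_eq_of_modEq hl ht (by omega) hk hkl h
  have hj : j ∈ Icc 1 ((l - 1) / 2) := by
    rw [Nat.odd_iff] at hl
    rw [mem_Icc]
    omega
  rw [← hrk, iT_rpT hl ht hlt hj]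

theorem two_mul_iT_sub_one_eq_abs (hl : Odd l) (ht : Odd t) {u n : ℤ}
    (hut : u * t ≡ -1 [ZMOD l]) (hun : Odd (u + n)) (hk : 1 ≤ k) (hkl : 2 * k ≤ l)
    (h : |u * (2 * k - 1) - n * l| < l) :
    2 * (iT l t k : ℤ) - 1 = |u * (2 * k - 1) - n * l| := by
  have hlt : IsCoprime (l : ℤ) t := by
    obtain ⟨c, hc⟩ := hut.dvd
    exact ⟨-c, -u, by linarith⟩
  have hodd : Odd (u * (2 * k - 1) - n * l) := by
    obtain ⟨c, hc⟩ := hun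
    obtain ⟨d, rfl⟩ := hl
    refine ⟨u * k - u - n * d - n + c, ?_⟩
    push_cast
    linear_combination hc
  have hmod : (u * (2 * k - 1) - n * l) * t ≡ -(2 * k - 1) [ZMOD l] := by
    calc (u * (2 * k - 1) - n * l) * t
        = (2 * k - 1) * (u * t) + l * (-n * t) := by ring
      _ ≡ (2 * k - 1) * (u * t) [ZMOD l] := Int.modEq_add_fac_self
      _ ≡ (2 * k - 1) * -1 [ZMOD l] := hut.mul_left _
      _ = -(2 * k - 1) := by ring
  refine two_mul_iT_sub_one_eq_of_modEq hl ht hlt hk hkl (odd_abs.2 hodd)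
    (abs_pos.2 fun h0 => by simp [h0] at hodd) h ?_
  rcases abs_choice (u * (2 * k - 1) - n * l : ℤ) with habs | habs <;> rw [habs]
  · exact Or.inr hmod
  · rw [neg_mul]
    exact Or.inl (by simpa only [neg_neg] using hmod.neg)

end

lemma two_mul_iT_sub_one_eq_abs_of_eq_four_mul_sub_one {l t m p : ℕ}
    (hl : (l : ℤ) = 4 * m * p - 1) (ht : (t : ℤ) = l - 2 * p) {k : ℕ} (hk : 1 ≤ k)
    (hkl : 2 * k ≤ l) {n : ℤ} (hn : Odd n) (h : |2 * m * (2 * k - 1) - n * l| < (l : ℤ)) :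
    2 * (iT l t k : ℤ) - 1 = |2 * m * (2 * k - 1) - n * l| := by
  have hlodd : Odd (l : ℤ) := ⟨2 * m * p - 1, by linarith⟩
  have htodd : Odd (t : ℤ) := ht ▸ hlodd.sub_even (even_two_mul _)
  have hinv : 2 * m * t ≡ -1 [ZMOD l] :=
    Int.modEq_iff_dvd.2 ⟨1 - 2 * m, by rw [ht, hl]; ring⟩
  exact two_mul_iT_sub_one_eq_abs (by exact_mod_cast hlodd) (by exact_mod_cast htodd) hinv
    ((even_two_mul _).add_odd hn) hk hkl h

lemma two_mul_mul_two_mul_sub_one_mem_Ioo {m p s k : ℤ} (hs0 : 0 ≤ s) (hs : s < 2 * m)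
    (hk : s * p + 1 ≤ k) (hk' : k ≤ (s + 1) * p) (hkmp : k < 2 * m * p) :
    2 * m * (2 * k - 1) ∈ Set.Ioo (s * (4 * m * p - 1)) ((s + 1) * (4 * m * p - 1)) := by
  have hm : 0 < m := by linarith
  constructor
  · calc s * (4 * m * p - 1) < 2 * m * (2 * (s * p + 1) - 1) := by linarith
      _ ≤ 2 * m * (2 * k - 1) := by gcongr
  · rcases (Int.add_one_le_iff.2 hs).lt_or_eq with hlt | heq
    · calc 2 * m * (2 * k - 1) ≤ 2 * m * (2 * ((s + 1) * p) - 1) := by gcongr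
        _ < (s + 1) * (4 * m * p - 1) := by linarith
    · calc 2 * m * (2 * k - 1) < 2 * m * (4 * m * p - 1) :=
            mul_lt_mul_of_pos_left (by linarith) (by linarith)
        _ = (s + 1) * (4 * m * p - 1) := by rw [heq]

/-- Lemma 2.2(ii): for `l = 4mp-1`, `t = 4mp-2p-1`, the explicit value of `i_k`
on the interval `sp+1 ≤ k ≤ min((s+1)p, 2mp-1)`. -/
theorem iT_formula_neg_neg
    (m p s k : ℕ) (hm : 0 < m) (hp : 0 < p)
    (hs : s ≤ 2 * m - 1) (hk1 : s * p + 1 ≤ k)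
    (hk2 : k ≤ min ((s + 1) * p) (2 * m * p - 1)) :
    (iT (4 * m * p - 1) (4 * m * p - 2 * p - 1) k : ℤ)
      = if s % 2 = 0 then
          2 * (m : ℤ) * ((p : ℤ) - (k : ℤ)) + (m : ℤ)
            + ((s / 2 : ℕ) : ℤ) * (4 * (m : ℤ) * (p : ℤ) - 1)
        else
          2 * (m : ℤ) * ((k : ℤ) - (p : ℤ)) - (m : ℤ) + 1
            - (((s - 1) / 2 : ℕ) : ℤ) * (4 * (m : ℤ) * (p : ℤ) - 1) := by
  obtain ⟨hk_le, hk_le'⟩ := le_min_iff.1 hk2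
  have hmp : p ≤ m * p := Nat.le_mul_of_pos_left p hm
  have hl : ((4 * m * p - 1 : ℕ) : ℤ) = 4 * m * p - 1 := by
    push_cast [show 1 ≤ 4 * m * p by nlinarith]; ring
  have ht : ((4 * m * p - 2 * p - 1 : ℕ) : ℤ) = (4 * m * p - 1 : ℕ) - 2 * p := by
    rw [mul_assoc]; omega
  have hkmp : k < 2 * m * p := by omega
  have hkl : 2 * k ≤ 4 * m * p - 1 := by rw [mul_assoc] at hkmp ⊢; omega
  obtain ⟨hlower, hupper⟩ := two_mul_mul_two_mul_sub_one_mem_Ioo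
    (m := m) (p := p) (s := s) (k := k) (by omega) (by omega)
    (by exact_mod_cast hk1) (by exact_mod_cast hk_le) (by exact_mod_cast hkmp)
  have two_mul_iT {n : ℤ} := two_mul_iT_sub_one_eq_abs_of_eq_four_mul_sub_one
    (n := n) hl ht (by omega) hkl
  rw [hl] at two_mul_iT
  rcases Nat.even_or_odd' s with ⟨a, rfl | rfl⟩ <;> push_cast at hlower hupper
  · have habs := abs_of_neg (sub_neg.2 hupper)
    have hiT := two_mul_iT (odd_two_mul_add_one (a : ℤ)) (by linarith)
    rw [if_pos (by omega), Nat.mul_div_cancel_left a two_pos]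
    linarith
  · have habs := abs_of_pos (sub_pos.2 hlower)
    have hiT := two_mul_iT (odd_two_mul_add_one (a : ℤ)) (by linarith)
    rw [if_neg (by omega), Nat.add_sub_cancel, Nat.mul_div_cancel_left a two_pos]
    linarith

end
end

section
/- Let m and p be positive integers and set l = 4mp−1, t = 4mp−2p−1, p' = 2mp−1. Then for every integer j with 1 ≤ j ≤ p'−1 one has σ_{j+1} + σ_{p'+1−j} = 0; that is, σ_{j+1} = −σ_{2mp−j}. -/
open Finset

noncomputable section

/-!
For `l = 4mp - 1` the two exponents are `⌊xt/l⌋` and `⌊yt/l⌋` with `x + y = l + 1`. Since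
`xt + yt = lt + t` and `t < l`, they add up to the odd number `t` exactly when the remainder of
`yt` modulo `l` is at most `t`. With `t = l - 2p` and `y = l - 2j`, this remainder is that of
`2j · 2p = 4p · j`. Finally `m · 4p ≡ 1 (mod l)`, so multiplication by `4p` exchanges the two digits
of `j = m · a + b`, giving the remainder `a + 4p · b`, and this is at most `t` because `a < 2p`
and `b < m`.
-/

lemma neg_one_pow_add_neg_one_pow_eq_zero_of_odd_add {R : Type*} [Ring R] {a b : ℕ}
    (h : Odd (a + b)) : (-1 : R) ^ a + (-1) ^ b = 0 := by
  obtain ha | ha := Nat.even_or_odd a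
  · rw [ha.neg_one_pow, ((Nat.odd_add'.1 h).2 ha).neg_one_pow, add_neg_cancel]
  · rw [ha.neg_one_pow, ((Nat.odd_add.1 h).1 ha).neg_one_pow, neg_add_cancel]

lemma mul_div_add_mul_div_eq_of_mul_mod_le {l t x y : ℕ} (htl : t < l) (hxy : x + y = l + 1)
    (hy : y * t % l ≤ t) : x * t / l + y * t / l = t := by
  have hl : 0 < l := by lia
  have hsum : x * t + y * t = t + l * t := by rw [← add_mul, hxy, add_one_mul, add_comm]
  have hquot : y * t / l ≤ t := by
    refine Nat.lt_succ_iff.1 <| Nat.div_lt_of_lt_mul ?_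
    rw [Nat.mul_succ]
    lia
  have hx : x * t = (t - y * t % l) + l * (t - y * t / l) := by
    have hdiv := Nat.mod_add_div (y * t) l
    have := Nat.mul_le_mul_left l hquot
    rw [Nat.mul_sub]
    lia
  rw [hx, Nat.add_mul_div_left _ _ hl, Nat.div_eq_of_lt (by lia), zero_add,
    Nat.sub_add_cancel hquot]

lemma mul_mod_eq_mul_mod_of_add_eq {l x x' y y' : ℕ} (hx : x + x' = l) (hy : y + y' = l) :
    x * y % l = x' * y' % l := by
  have h : x * y + x' * l = x' * y' + y * l := by
    nth_rw 1 [← hy]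
    rw [← hx]
    ring
  rw [← Nat.add_mul_mod_self_right, h, Nat.add_mul_mod_self_right]

lemma mul_mod_mul_sub_one {m n j : ℕ} (hj : j < m * n - 1) :
    n * j % (m * n - 1) = j / m + n * (j % m) := by
  have hm : 0 < m := Nat.pos_of_ne_zero fun h ↦ by simp [h] at hj
  have hquot : j / m < n := Nat.div_lt_of_lt_mul (by lia)
  have hrem : j % m < m := Nat.mod_lt j hm
  have hdiv : m * (j / m) + j % m = j := Nat.div_add_mod j m
  have hlt : j / m + n * (j % m) < m * n - 1 := by
    obtain hquot' | hquot' := (Nat.succ_le_of_lt hquot).lt_or_eq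
    · have := Nat.mul_le_mul_left n (Nat.succ_le_of_lt hrem)
      lia
    · have hrem' : j % m + 1 < m := by
        rw [← hquot', Nat.mul_succ] at hj
        lia
      have := Nat.mul_le_mul_left n (Nat.succ_le_of_lt hrem')
      lia
  have hmul : n * j = j / m + n * (j % m) + (m * n - 1) * (j / m) := by
    rw [Nat.sub_mul, one_mul]
    have : j / m ≤ m * n * (j / m) := Nat.le_mul_of_pos_left _ (by lia)
    nth_rw 1 [← hdiv]
    lia
  rw [hmul, Nat.add_mul_mod_self_left, Nat.mod_eq_of_lt hlt]

lemma sigmaT_add_sigmaT_eq_zero {l t i j : ℕ} (ht : Odd t) (htl : t < l)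
    (hij : (2 * i - 1) + (2 * j - 1) = l + 1) (hj : (2 * j - 1) * t % l ≤ t) :
    sigmaT l t i + sigmaT l t j = 0 :=
  neg_one_pow_add_neg_one_pow_eq_zero_of_odd_add <|
    (mul_div_add_mul_div_eq_of_mul_mod_le htl hij hj).symm ▸ ht

lemma four_mul_mul_mod_le {m p j : ℕ} (hj : j < 2 * m * p) :
    4 * p * j % (4 * m * p - 1) ≤ 4 * m * p - 2 * p - 1 := by
  have hm : 0 < m := Nat.pos_of_ne_zero fun h ↦ by simp [h] at hj
  have hquot : j / m < 2 * p := Nat.div_lt_of_lt_mul (by lia)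
  have hrem : p * (j % m + 1) ≤ p * m := Nat.mul_le_mul_left p (Nat.mod_lt j hm)
  have hl : 4 * m * p = m * (4 * p) := by ring
  rw [hl, mul_mod_mul_sub_one (by lia)]
  lia

/-- Lemma 2.3(ii): for `l = 4mp-1`, `t = 4mp-2p-1`, `p' = 2mp-1`, one has
`σ_(j+1) + σ_(p'+1-j) = 0` for `1 ≤ j ≤ p'-1`. -/
theorem sigma_pair_sum_neg_neg
    (m p j : ℕ) (hm : 0 < m) (hp : 0 < p)
    (hj1 : 1 ≤ j) (hj2 : j ≤ 2 * m * p - 2) :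
    sigmaT (4 * m * p - 1) (4 * m * p - 2 * p - 1) (j + 1) + sigmaT (4 * m * p - 1) (4 * m * p - 2 * p - 1) (2 * m * p - j) = 0 := by
  have hmp : p ≤ m * p := Nat.le_mul_of_pos_left p hm
  refine sigmaT_add_sigmaT_eq_zero ⟨2 * (m * p) - p - 1, by lia⟩ (by lia) (by lia) ?_
  calc (2 * (2 * m * p - j) - 1) * (4 * m * p - 2 * p - 1) % (4 * m * p - 1)
      = 2 * j * (2 * p) % (4 * m * p - 1) :=
        mul_mod_eq_mul_mod_of_add_eq (by lia) (by lia)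
    _ = 4 * p * j % (4 * m * p - 1) := by congr 1; ring
    _ ≤ 4 * m * p - 2 * p - 1 := four_mul_mul_mod_le (by lia)

end
end

section
/- Let m and p be positive integers and set l = 4mp+1 and t = 4mp−2p+1. Then for every integer j with 1 ≤ j ≤ 2mp, the sign σ_j = (−1)^{⌊(2j−1)t/l⌋} equals 1 if j mod 2m lies in {1, 2, …, m}, and equals −1 if j mod 2m lies in {0, m+1, m+2, …, 2m−1}. -/
open Finset

noncomputable section

/-!
Write `t = l - c`, `j = i + 1` and `x = c(2i+1)`. Then `(2j-1)t = (2i+1)l - x`, so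
`⌊(2j-1)t/l⌋ = 2i + 1 - ⌈x/l⌉ = 2i - ⌊(x-1)/l⌋`, and `σ_j = (-1)^⌊(x-1)/l⌋`.

For `l = 2mc + d` and `i = ma + s` with `0 ≤ s < m`, one has `x = al + (c(2s+1) - ad)`, and the
bracket lies in `(0, l]` as long as `ad < c`. Hence `⌊(x-1)/l⌋ = a = ⌊(j-1)/m⌋`: the signs come in
alternating blocks of length `m`. The theorem is the case `c = 2p`, `d = 1`.
-/

theorem succ_mul_sub_div {l c : ℕ} (hc : 0 < c) (hcl : c ≤ l) (n : ℕ) :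
    (n + 1) * (l - c) / l = n - (c * (n + 1) - 1) / l := by
  have hpos : 0 < c * (n + 1) := Nat.mul_pos hc n.succ_pos
  have hle : c * (n + 1) ≤ l * (n + 1) := Nat.mul_le_mul_right _ hcl
  have hsub : (n + 1) * (l - c) = l * (n + 1) - (c * (n + 1) - 1 + 1) := by
    rw [Nat.sub_add_cancel hpos, mul_comm, Nat.sub_mul]
  rw [hsub, Nat.mul_sub_div _ _ _ (by omega), Nat.add_sub_add_right]

theorem sigmaT_sub_succ {l c : ℕ} (hc : 0 < c) (hcl : c ≤ l) (i : ℕ) :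
    sigmaT l (l - c) (i + 1) = (-1) ^ ((c * (2 * i + 1) - 1) / l) := by
  have hpos : 0 < c * (2 * i + 1) := Nat.mul_pos hc (Nat.succ_pos _)
  have hle : c * (2 * i + 1) ≤ l * (2 * i + 1) := Nat.mul_le_mul_right _ hcl
  have hbound : (c * (2 * i + 1) - 1) / l < 2 * i + 1 := Nat.div_lt_of_lt_mul (by omega)
  rw [sigmaT, show 2 * (i + 1) - 1 = 2 * i + 1 by omega, succ_mul_sub_div hc hcl]
  apply neg_one_pow_congr
  rw [Nat.even_sub (by omega)]
  simp only [even_two_mul, true_iff]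

theorem mul_odd_sub_one_div_eq_div {m c d i : ℕ} (h : d * i < m * c) :
    (c * (2 * i + 1) - 1) / (2 * m * c + d) = i / m := by
  have hm : 0 < m := Nat.pos_of_mul_pos_right (Nat.zero_lt_of_lt h)
  obtain ⟨a, s, hs, rfl⟩ : ∃ a s, s < m ∧ i = m * a + s :=
    ⟨i / m, i % m, Nat.mod_lt i hm, (Nat.div_add_mod i m).symm⟩
  have hda : d * a < c := by
    refine Nat.lt_of_mul_lt_mul_left (a := m) ?_
    calc m * (d * a) ≤ m * (d * a) + d * s := Nat.le_add_right _ _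
      _ = d * (m * a + s) := by ring
      _ < m * c := h
  have hquot : (m * a + s) / m = a := by
    rw [Nat.mul_add_div hm, Nat.div_eq_of_lt hs, Nat.add_zero]
  have hnum : c * (2 * (m * a + s) + 1) + d * a =
      a * (2 * m * c + d) + c * (2 * s + 1) := by ring
  have hrem : c * (2 * s + 1) ≤ 2 * m * c := by
    calc c * (2 * s + 1) ≤ c * (2 * m) := Nat.mul_le_mul_left c (by omega)
      _ = 2 * m * c := by ring
  have hpos : c ≤ c * (2 * s + 1) := Nat.le_mul_of_pos_right c (Nat.succ_pos _)
  rw [hquot]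
  apply Nat.div_eq_of_lt_le
  · omega
  · rw [Nat.add_one_mul a]
    omega

theorem sigmaT_two_mul_add_succ {m c d i : ℕ} (h : d * i < m * c) :
    sigmaT (2 * m * c + d) (2 * m * c + d - c) (i + 1) = (-1) ^ (i / m) := by
  obtain ⟨hm, hc⟩ : 0 < m ∧ 0 < c := CanonicallyOrderedAdd.mul_pos.mp (Nat.zero_lt_of_lt h)
  rw [sigmaT_sub_succ hc (by nlinarith), mul_odd_sub_one_div_eq_div h]

theorem even_div_iff_succ_mod {m : ℕ} (hm : 0 < m) (i : ℕ) :
    Even (i / m) ↔ 1 ≤ (i + 1) % (2 * m) ∧ (i + 1) % (2 * m) ≤ m := by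
  have hlt : i % (2 * m) < 2 * m := Nat.mod_lt i (by omega)
  have hone : 1 % (2 * m) = 1 := Nat.mod_eq_of_lt (by omega)
  rw [Nat.even_div, Nat.div_eq_zero_iff_lt hm, Nat.add_mod_eq_ite, hone]
  split_ifs <;> omega

theorem sigma_formula_neg_pos_general
    (m c d j : ℕ) (hj1 : 1 ≤ j) (hj2 : d * (j - 1) < m * c) :
    (1 ≤ j % (2 * m) ∧ j % (2 * m) ≤ m →
      sigmaT (2 * m * c + d) (2 * m * c + d - c) j = 1) ∧
    (j % (2 * m) = 0 ∨ m + 1 ≤ j % (2 * m) →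
      sigmaT (2 * m * c + d) (2 * m * c + d - c) j = -1) := by
  obtain ⟨i, rfl⟩ := Nat.exists_eq_add_of_le' hj1
  rw [Nat.add_sub_cancel] at hj2
  have hm : 0 < m := Nat.pos_of_mul_pos_right (Nat.zero_lt_of_lt hj2)
  rw [sigmaT_two_mul_add_succ hj2]
  refine ⟨fun hr => ((even_div_iff_succ_mod hm i).mpr hr).neg_one_pow, fun hr => ?_⟩
  refine Odd.neg_one_pow (Nat.not_even_iff_odd.mp fun heven => ?_)
  have hmod := (even_div_iff_succ_mod hm i).mp heven
  omega

/-- Lemma 2.4(i): for `l = 4mp+1`, `t = 4mp-2p+1`, the sign `σ_j` is `1` if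
`j ≡ 1, …, m (mod 2m)` and `-1` if `j ≡ 0, m+1, …, 2m-1 (mod 2m)`. -/
theorem sigma_formula_neg_pos
    (m p : ℕ) (hm : 0 < m) (hp : 0 < p)
    (j : ℕ) (hj1 : 1 ≤ j) (hj2 : j ≤ 2 * m * p) :
    (1 ≤ j % (2 * m) ∧ j % (2 * m) ≤ m →
      sigmaT (4 * m * p + 1) (4 * m * p - 2 * p + 1) j = 1) ∧
    (j % (2 * m) = 0 ∨ m + 1 ≤ j % (2 * m) →
      sigmaT (4 * m * p + 1) (4 * m * p - 2 * p + 1) j = -1) := by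
  have hl : 2 * m * (2 * p) = 4 * m * p := by ring
  have hle : 2 * p ≤ 4 * m * p := by nlinarith
  have h := sigma_formula_neg_pos_general m (2 * p) 1 j hj1 (by grind)
  rwa [hl, Nat.sub_add_comm hle] at h

end
end

section
/- Let m and p be positive integers and set l = 4mp+1, t = 4mp−2p+1, p' = 2mp. Then for every integer j with 1 ≤ j ≤ p'−1: σ_{j+1} + σ_{p'+1−j} = 2 if j ≡ 0 (mod 2m), σ_{j+1} + σ_{p'+1−j} = −2 if j ≡ m (mod 2m), and σ_{j+1} + σ_{p'+1−j} = 0 otherwise. -/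
open Finset

noncomputable section

/-!
Put `s = 2p`, so that `l = 2ms + 1`, `t = l - s` and `p' = ms`. As `2j - 1` is odd, replacing `t`
by `l - t` does not change `σ_j`, provided `l ∤ (2j-1)t`. Since `s / l` is slightly less than
`1 / (2m)`, rounding gives `⌊(2j+1)s/l⌋ = ⌊j/m⌋` and `⌊(l-2j)s/l⌋ = s - ⌈2js/l⌉ = s - ⌈j/m⌉`.
As `s` is even, this means `σ_{j+1} = (-1)^⌊j/m⌋` and `σ_{p'+1-j} = (-1)^⌈j/m⌉`. The two exponents
agree when `m ∣ j` and differ by `1` otherwise.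
-/

lemma ceilDiv_eq_div_add_one {a b : ℕ} (hb : 0 < b) (h : ¬b ∣ a) : a ⌈/⌉ b = a / b + 1 := by
  refine le_antisymm ?_ (Nat.succ_le_of_lt <| not_le.mp fun hle ↦ h ?_)
  · exact (ceilDiv_le_iff_le_mul hb).2 (Nat.lt_mul_div_succ a hb).le
  · exact Dvd.intro (a / b) <|
      (Nat.mul_div_le a b).antisymm ((ceilDiv_le_iff_le_mul hb).1 hle)

lemma mul_sub_div_eq_sub_ceilDiv {l n x : ℕ} (hl : 0 < l) (hx : x ≤ l * n) :
    (l * n - x) / l = n - x ⌈/⌉ l := by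
  cases x with
  | zero => simp [hl]
  | succ y =>
    have hceil : (y + 1) ⌈/⌉ l = y / l + 1 := by
      rw [Nat.ceilDiv_eq_add_pred_div, show y + 1 + l - 1 = y + l by omega, Nat.add_div_right y hl]
    rw [hceil, Nat.mul_sub_div y l n hx]

lemma sigmaT_sub_of_not_dvd {l s j : ℕ} (hs : s < l) (h : ¬l ∣ (2 * j - 1) * s) :
    sigmaT l (l - s) j = sigmaT l s j := by
  have hj : 0 < 2 * j - 1 := Nat.pos_of_ne_zero fun h0 ↦ h (by simp [h0])
  have hl : 0 < l := Nat.zero_lt_of_lt hs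
  have hlt : (2 * j - 1) * s < l * (2 * j - 1) := by rw [mul_comm l]; gcongr
  have hquot : (2 * j - 1) * (l - s) / l = (2 * j - 1) - ((2 * j - 1) * s / l + 1) := by
    rw [← ceilDiv_eq_div_add_one hl h, ← mul_sub_div_eq_sub_ceilDiv hl hlt.le, Nat.mul_sub,
      mul_comm l]
  have hquot_lt : (2 * j - 1) * s / l < 2 * j - 1 := Nat.div_lt_of_lt_mul hlt
  have hodd : ¬Even (2 * j - 1) := by grind
  rw [sigmaT, sigmaT, hquot]
  refine neg_one_pow_congr ?_
  simp [Nat.even_sub (Nat.succ_le_of_lt hquot_lt), Nat.even_add_one, hodd]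

section

variable {m s j : ℕ}

lemma two_mul_add_one_mul_div (hj : j < m * (s + 1)) :
    (2 * j + 1) * s / (2 * m * s + 1) = j / m := by
  have hm : 0 < m := Nat.pos_of_mul_pos_right (Nat.zero_lt_of_lt hj)
  refine eq_of_forall_le_iff fun k ↦ ?_
  rw [Nat.le_div_iff_mul_le (Nat.succ_pos _), Nat.le_div_iff_mul_le hm]
  constructor
  · contrapose!
    intro hlt
    have hk : 0 < k := Nat.pos_of_mul_pos_right (Nat.zero_lt_of_lt hlt)
    calc (2 * j + 1) * s ≤ 2 * (j + 1) * s := by gcongr; omega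
      _ ≤ 2 * (k * m) * s := by gcongr; exact hlt
      _ < 2 * (k * m) * s + k := Nat.lt_add_of_pos_right hk
      _ = k * (2 * m * s + 1) := by ring
  · intro hle
    have hk : k ≤ s := Nat.lt_succ_iff.mp <| Nat.lt_of_mul_lt_mul_left (a := m) (by linarith)
    calc k * (2 * m * s + 1) = 2 * (k * m) * s + k := by ring
      _ ≤ 2 * j * s + s := by gcongr
      _ = (2 * j + 1) * s := by ring

lemma two_mul_mul_ceilDiv (hm : 0 < m) (hj : j ≤ 2 * m * s) :
    (2 * j * s) ⌈/⌉ (2 * m * s + 1) = j ⌈/⌉ m := by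
  refine eq_of_forall_ge_iff fun k ↦ ?_
  rw [ceilDiv_le_iff_le_mul (Nat.succ_pos _), ceilDiv_le_iff_le_mul hm]
  constructor
  · contrapose!
    intro hlt
    have hk : k < 2 * s := Nat.lt_of_mul_lt_mul_left (a := m) (by linarith)
    calc (2 * m * s + 1) * k = 2 * (m * k) * s + k := by ring
      _ < 2 * (m * k) * s + 2 * s := by gcongr
      _ = 2 * (m * k + 1) * s := by ring
      _ ≤ 2 * j * s := by gcongr; exact hlt
  · intro hle
    calc 2 * j * s ≤ 2 * (m * k) * s := by gcongr
      _ ≤ 2 * (m * k) * s + k := Nat.le_add_right _ _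
      _ = (2 * m * s + 1) * k := by ring

lemma sigmaT_succ_eq_neg_one_pow_div (hj : j < m * (s + 1)) :
    sigmaT (2 * m * s + 1) s (j + 1) = (-1) ^ (j / m) := by
  rw [sigmaT, ← two_mul_add_one_mul_div hj, show 2 * (j + 1) - 1 = 2 * j + 1 by omega]

lemma sigmaT_mul_add_one_sub_eq_neg_one_pow_ceilDiv (hm : 0 < m) (hj : j ≤ m * s) :
    sigmaT (2 * m * s + 1) s (m * s + 1 - j) = (-1) ^ (s + j ⌈/⌉ m) := by
  have hodd : 2 * (m * s + 1 - j) - 1 = 2 * m * s + 1 - 2 * j := by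
    rw [mul_assoc]; omega
  have hceil : j ⌈/⌉ m ≤ s := (ceilDiv_le_iff_le_mul hm).2 hj
  have hle : 2 * j * s ≤ (2 * m * s + 1) * s := by gcongr; linarith
  rw [sigmaT, hodd, Nat.sub_mul, mul_sub_div_eq_sub_ceilDiv (Nat.succ_pos _) hle,
    two_mul_mul_ceilDiv hm (by linarith)]
  exact neg_one_pow_congr (by rw [Nat.even_sub hceil, Nat.even_add])

lemma sigmaT_two_mul_mul_add_one_sub_right (hj : 1 ≤ j) (hj' : j ≤ m * s) :
    sigmaT (2 * m * s + 1) (2 * m * s + 1 - s) j = sigmaT (2 * m * s + 1) s j := by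
  have hm : 0 < m := Nat.pos_of_mul_pos_right (hj.trans hj')
  have hs : s < 2 * m * s + 1 := by nlinarith
  have hcop : Nat.Coprime (2 * m * s + 1) s := by simp
  refine sigmaT_sub_of_not_dvd hs fun h ↦ ?_
  have hle : 2 * m * s + 1 ≤ 2 * j - 1 :=
    Nat.le_of_dvd (by omega) (hcop.dvd_of_dvd_mul_right h)
  linarith [Nat.sub_le (2 * j) 1]

end

lemma neg_one_pow_div_add_neg_one_pow_ceilDiv {m : ℕ} (hm : 0 < m) (j : ℕ) :
    ((-1) ^ (j / m) + (-1) ^ (j ⌈/⌉ m) : ℤ) =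
      if j % (2 * m) = 0 then 2 else if j % (2 * m) = m then -2 else 0 := by
  by_cases h : m ∣ j
  · obtain ⟨k, rfl⟩ := h
    have hceil : (m * k) ⌈/⌉ m = k := smul_ceilDiv hm k
    rw [Nat.mul_div_cancel_left k hm, hceil, mul_comm 2 m, Nat.mul_mod_mul_left]
    rcases Nat.even_or_odd k with hk | hk
    · simp [Nat.even_iff.mp hk, hk.neg_one_pow]
    · simp [Nat.odd_iff.mp hk, hk.neg_one_pow, hm.ne']
  · have hmod : ¬m ∣ j % (2 * m) := by rwa [Nat.dvd_mod_iff (Nat.dvd_mul_left m 2)]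
    have hzero : j % (2 * m) ≠ 0 := fun h0 ↦ hmod (h0 ▸ dvd_zero m)
    have hhalf : j % (2 * m) ≠ m := fun hm' ↦ hmod hm'.symm.dvd
    rw [ceilDiv_eq_div_add_one hm h, pow_succ, if_neg hzero, if_neg hhalf]
    ring

/-- Lemma 2.5(ii): for `l = 4mp+1`, `t = 4mp-2p+1`, `p' = 2mp`, the value of
`σ_(j+1) + σ_(p'+1-j)` for `1 ≤ j ≤ p'-1`. -/
theorem sigma_pair_sum_neg_pos
    (m p j : ℕ) (hm : 0 < m) (hp : 0 < p)
    (hj1 : 1 ≤ j) (hj2 : j ≤ 2 * m * p - 1) :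
    sigmaT (4 * m * p + 1) (4 * m * p - 2 * p + 1) (j + 1) + sigmaT (4 * m * p + 1) (4 * m * p - 2 * p + 1) (2 * m * p + 1 - j)
      = if j % (2 * m) = 0 then 2 else if j % (2 * m) = m then -2 else 0 := by
  have hl : 4 * m * p + 1 = 2 * m * (2 * p) + 1 := by ring
  have ht : 4 * m * p - 2 * p + 1 = 2 * m * (2 * p) + 1 - 2 * p := by
    have : 2 * p ≤ 4 * m * p := by nlinarith
    rw [← hl]; omega
  have hp' : 2 * m * p = m * (2 * p) := by ring
  have hj : j < m * (2 * p) := by omega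
  have h₁ : sigmaT (4 * m * p + 1) (4 * m * p - 2 * p + 1) (j + 1) = (-1) ^ (j / m) := by
    rw [hl, ht, sigmaT_two_mul_mul_add_one_sub_right (by omega) (by omega),
      sigmaT_succ_eq_neg_one_pow_div (by linarith)]
  have h₂ : sigmaT (4 * m * p + 1) (4 * m * p - 2 * p + 1) (2 * m * p + 1 - j)
      = (-1) ^ (j ⌈/⌉ m) := by
    rw [hl, ht, hp', sigmaT_two_mul_mul_add_one_sub_right (by omega) (by omega),
      sigmaT_mul_add_one_sub_eq_neg_one_pow_ceilDiv hm hj.le, pow_add,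
      (even_two_mul p).neg_one_pow, one_mul]
  rw [h₁, h₂, neg_one_pow_div_add_neg_one_pow_ceilDiv hm]

end
end
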